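/- Let O ⊆ ℝ × ℝ be an open set that is invariant under the unit translation in the second coordinate (p ∈ O implies (p.1, p.2 + 1) ∈ O and (p.1, p.2 − 1) ∈ O) and that contains the line {p : ℝ × ℝ | p.1 = 0}. Then there exists a field T : ℝ × ℝ → Matrix (Fin 2) (Fin 2) ℝ which is smooth (ContDiff ℝ ⊤), satisfies T (p.1, p.2 + 1) = T p for all p, takes symmetric-matrix values at every point, has vanishing coordinate divergence (for every p and every b, fderiv ℝ (fun q => T q 0 b) p (1,0) + fderiv ℝ (fun q => T q 1 b) p (0,1) = 0), has support contained in O (the closure of {p | T p ≠ 0} is contained in O), is nonzero at at least one point, and satisfies the strict dominant energy condition with respect to g′ at every point: for every p, either T p = 0, or for all covectors ξ, ζ : Fin 2 → ℝ with ξ 0 * ξ 1 > 0, ζ 0 * ζ 1 > 0, and ξ 0 * ζ 1 + ξ 1 * ζ 0 > 0, one has ∑ a, ∑ b, T p a b * ξ a * ζ b > 0. -/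

import Mathlib

attribute [local instance] Matrix.normedAddCommGroup Matrix.normedSpace

/-!
The curve `t = 0` is null, so its constant tangent `k = ∂ₓ` is a null vector field, and the
candidate is null dust `T = ρ k ⊗ k`. Its divergence is `(∂ₖ ρ) k`, which vanishes when `ρ = φ(t)`.
Contracting with covectors gives `T(ξ, ζ) = ρ k(ξ) k(ζ)`, and a nonzero causal vector takes values
of the same strict sign on co-oriented timelike covectors, so `0 ≤ φ` suffices for the strict
dominant energy condition. Since the curve is compact in the cylinder, the neighborhood contains a
full strip `|t| < ε`, and `φ` can be any nonnegative bump supported there.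
-/

open Set

theorem exists_isOpen_prod_univ_subset_of_periodic {X Y : Type*} [TopologicalSpace X]
    [AddCommGroup Y] [LinearOrder Y] [IsOrderedAddMonoid Y] [Archimedean Y] [TopologicalSpace Y]
    [CompactIccSpace Y] {O : Set (X × Y)} (hO : IsOpen O) {c : Y} (hc : 0 < c)
    (hper : ∀ x, Function.Periodic (fun y => (x, y) ∈ O) c) {K : Set X} (hK : IsCompact K)
    (hKO : K ×ˢ univ ⊆ O) :
    ∃ U, IsOpen U ∧ K ⊆ U ∧ U ×ˢ univ ⊆ O := by
  obtain ⟨U, V, hU, -, hKU, hV, hUV⟩ := generalized_tube_lemma hK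
    (isCompact_Icc (a := 0) (b := c)) hO ((prod_mono_right (subset_univ _)).trans hKO)
  refine ⟨U, hU, hKU, ?_⟩
  rintro ⟨x, y⟩ ⟨hx, -⟩
  obtain ⟨y', hy', hyy'⟩ := (hper x).exists_mem_Ico₀ hc y
  exact hyy'.mpr (hUV ⟨hx, hV (Ico_subset_Icc_self hy')⟩)

theorem fderiv_apply_eq_zero_of_forall_add_smul_eq {𝕜 E F : Type*} [NontriviallyNormedField 𝕜]
    [NormedAddCommGroup E] [NormedSpace 𝕜 E] [NormedAddCommGroup F] [NormedSpace 𝕜 F]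
    {f : E → F} {p v : E} (h : ∀ t : 𝕜, f (p + t • v) = f p) : fderiv 𝕜 f p v = 0 := by
  by_cases hf : DifferentiableAt 𝕜 f p
  · simp [← hf.lineDeriv_eq_fderiv, lineDeriv, h]
  · simp [fderiv_zero_of_not_differentiableAt hf]

section DustTensor

/-- The energy-momentum tensor `ρ k ⊗ k` of dust with density `ρ` and constant velocity `k`,
given by its contravariant components; `k` is not normalized, so that it may be null. -/
def dustTensor {E ι : Type*} (ρ : E → ℝ) (k : ι → ℝ) (p : E) : Matrix ι ι ℝ :=
  ρ p • Matrix.vecMulVec k k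

variable {E ι : Type*}

theorem dustTensor_apply (ρ : E → ℝ) (k : ι → ℝ) (p : E) (a b : ι) :
    dustTensor ρ k p a b = ρ p * (k a * k b) := rfl

theorem isSymm_dustTensor (ρ : E → ℝ) (k : ι → ℝ) (p : E) : (dustTensor ρ k p).IsSymm :=
  Matrix.IsSymm.smul (Matrix.transpose_vecMulVec k k) (ρ p)

theorem contDiff_dustTensor [NormedAddCommGroup E] [NormedSpace ℝ E] [Fintype ι]
    {n : WithTop ℕ∞} {ρ : E → ℝ} (hρ : ContDiff ℝ n ρ) (k : ι → ℝ) :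
    ContDiff ℝ n (dustTensor ρ k) :=
  hρ.smul contDiff_const

theorem tsupport_dustTensor_subset [TopologicalSpace E] (ρ : E → ℝ) (k : ι → ℝ) :
    tsupport (dustTensor ρ k) ⊆ tsupport ρ :=
  tsupport_smul_subset_left ρ _

theorem sum_dustTensor_mul_mul [Fintype ι] (ρ : E → ℝ) (k : ι → ℝ) (p : E) (ξ ζ : ι → ℝ) :
    ∑ a, ∑ b, dustTensor ρ k p a b * ξ a * ζ b = ρ p * ((k ⬝ᵥ ξ) * (k ⬝ᵥ ζ)) := by
  simp_rw [dotProduct, Finset.sum_mul_sum, Finset.mul_sum, dustTensor_apply]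
  exact Finset.sum_congr rfl fun a _ => Finset.sum_congr rfl fun b _ => by ring

theorem fderiv_dustTensor_apply [NormedAddCommGroup E] [NormedSpace ℝ E] (ρ : E → ℝ) (k : ι → ℝ)
    (p : E) (a b : ι) :
    fderiv ℝ (fun q => dustTensor ρ k q a b) p = (k a * k b) • fderiv ℝ ρ p := by
  have hT : (fun q => dustTensor ρ k q a b) = (k a * k b) • ρ := funext fun _ => mul_comm _ _
  rw [hT, fderiv_const_smul_field, Pi.smul_apply]

theorem divergence_dustTensor (ρ : ℝ × ℝ → ℝ) (k : Fin 2 → ℝ) (p : ℝ × ℝ) (b : Fin 2) :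
    fderiv ℝ (fun q => dustTensor ρ k q 0 b) p (1, 0) +
      fderiv ℝ (fun q => dustTensor ρ k q 1 b) p (0, 1) = fderiv ℝ ρ p (k 0, k 1) * k b := by
  have hk : (k 0, k 1) = k 0 • ((1, 0) : ℝ × ℝ) + k 1 • (0, 1) := by simp
  simp only [fderiv_dustTensor_apply, hk, map_add, map_smul, smul_apply, smul_eq_mul]
  ring

end DustTensor

section Causal

/-- The strict dominant energy condition at a point, for the contravariant components `S` of the
energy-momentum tensor in null coordinates: up to a positive factor the inverse metric pairs
covectors by `ξ 0 * ζ 1 + ξ 1 * ζ 0`, so `ξ` is timelike iff `0 < ξ 0 * ξ 1`, and timelike `ξ`, `ζ`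
are co-oriented iff their pairing is positive. -/
def StrictDominantEnergyCondition (S : Matrix (Fin 2) (Fin 2) ℝ) : Prop :=
  S = 0 ∨ ∀ ξ ζ : Fin 2 → ℝ, ξ 0 * ξ 1 > 0 → ζ 0 * ζ 1 > 0 → ξ 0 * ζ 1 + ξ 1 * ζ 0 > 0 →
    ∑ a, ∑ b, S a b * ξ a * ζ b > 0

theorem mul_pos_of_coOriented {R : Type*} [CommRing R] [LinearOrder R] [IsStrictOrderedRing R]
    {x₀ x₁ z₀ z₁ : R} (hx : 0 < x₀ * x₁) (hz : 0 < z₀ * z₁) (hxz : 0 < x₀ * z₁ + x₁ * z₀) :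
    0 < x₀ * z₀ := by
  have hx₀ : x₀ ≠ 0 := left_ne_zero_of_mul hx.ne'
  refine pos_of_mul_pos_left (b := x₀ * z₁ + x₁ * z₀) ?_ hxz.le
  calc 0 < x₀ ^ 2 * (z₀ * z₁) + z₀ ^ 2 * (x₀ * x₁) := by positivity
    _ = x₀ * z₀ * (x₀ * z₁ + x₁ * z₀) := by ring

theorem dotProduct_mul_dotProduct_pos_of_causal {k ξ ζ : Fin 2 → ℝ} (hk₀ : k ≠ 0)
    (hk : 0 ≤ k 0 * k 1) (hξ : 0 < ξ 0 * ξ 1) (hζ : 0 < ζ 0 * ζ 1)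
    (hξζ : 0 < ξ 0 * ζ 1 + ξ 1 * ζ 0) : 0 < (k ⬝ᵥ ξ) * (k ⬝ᵥ ζ) := by
  have h₀ : 0 < ξ 0 * ζ 0 := mul_pos_of_coOriented hξ hζ hξζ
  have h₁ : 0 < ξ 1 * ζ 1 := by
    rw [mul_comm] at hξ hζ
    rw [add_comm] at hξζ
    exact mul_pos_of_coOriented hξ hζ hξζ
  have hsq : 0 < k 0 ^ 2 * (ξ 0 * ζ 0) + k 1 ^ 2 * (ξ 1 * ζ 1) := by
    obtain ⟨a, ha⟩ := Function.ne_iff.mp hk₀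
    fin_cases a
    · have : k 0 ≠ 0 := ha
      positivity
    · have : k 1 ≠ 0 := ha
      positivity
  calc 0 < k 0 ^ 2 * (ξ 0 * ζ 0) + k 1 ^ 2 * (ξ 1 * ζ 1)
        + k 0 * k 1 * (ξ 0 * ζ 1 + ξ 1 * ζ 0) := add_pos_of_pos_of_nonneg hsq (by positivity)
    _ = (k ⬝ᵥ ξ) * (k ⬝ᵥ ζ) := by simp only [dotProduct, Fin.sum_univ_two]; ring

theorem strictDominantEnergyCondition_dustTensor {E : Type*} {ρ : E → ℝ} {k : Fin 2 → ℝ} {p : E}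
    (hρ : 0 ≤ ρ p) (hk₀ : k ≠ 0) (hk : 0 ≤ k 0 * k 1) :
    StrictDominantEnergyCondition (dustTensor ρ k p) := by
  rcases hρ.eq_or_lt with hρ | hρ
  · exact .inl (by rw [dustTensor, ← hρ, zero_smul])
  · refine .inr fun ξ ζ hξ hζ hξζ => ?_
    rw [sum_dustTensor_mul_mul]
    exact mul_pos hρ (dotProduct_mul_dotProduct_pos_of_causal hk₀ hk hξ hζ hξζ)

end Causal

/-- Proposition 2 of the paper in coordinates on the cylinder: in any open,
unit-translation-invariant neighborhood of the closed curve `t = 0` (which is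
null for the metric `g′(u,v) = (u 0 * v 1 + u 1 * v 0)/2`) there is a smooth,
periodic, symmetric, conserved energy-momentum field, supported in the
neighborhood and nonvanishing, satisfying the strict dominant energy condition
with respect to `g′`. -/
theorem strict_dominant_energy_condition_insufficient
    (O : Set (ℝ × ℝ)) (hO : IsOpen O)
    (hinv : ∀ p ∈ O, (p.1, p.2 + 1) ∈ O ∧ (p.1, p.2 - 1) ∈ O)
    (hline : {p : ℝ × ℝ | p.1 = 0} ⊆ O) :
    ∃ T : ℝ × ℝ → Matrix (Fin 2) (Fin 2) ℝ,
      ContDiff ℝ (⊤ : ℕ∞) T ∧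
      (∀ p : ℝ × ℝ, T (p.1, p.2 + 1) = T p) ∧
      (∀ p : ℝ × ℝ, (T p).IsSymm) ∧
      (∀ p : ℝ × ℝ, ∀ b : Fin 2,
        fderiv ℝ (fun q => T q 0 b) p (1, 0) + fderiv ℝ (fun q => T q 1 b) p (0, 1) = 0) ∧
      closure {p : ℝ × ℝ | T p ≠ 0} ⊆ O ∧
      (∃ p : ℝ × ℝ, T p ≠ 0) ∧
      (∀ p : ℝ × ℝ, T p = 0 ∨
        ∀ ξ ζ : Fin 2 → ℝ, ξ 0 * ξ 1 > 0 → ζ 0 * ζ 1 > 0 →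
          ξ 0 * ζ 1 + ξ 1 * ζ 0 > 0 →
          ∑ a, ∑ b, T p a b * ξ a * ζ b > 0) := by
  have hper (t : ℝ) : Function.Periodic (fun x => (t, x) ∈ O) 1 := fun x => propext
    ⟨fun h => by simpa using (hinv _ h).2, fun h => (hinv _ h).1⟩
  obtain ⟨U, hU, h0U, hUO⟩ := exists_isOpen_prod_univ_subset_of_periodic hO one_pos hper
    isCompact_singleton (K := {0}) fun p hp => hline hp.1
  obtain ⟨φ, hφU, -, hφ, hφrange, hφ0⟩ :=
    exists_contDiff_tsupport_subset (n := ⊤) (hU.mem_nhds (h0U rfl))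
  have hρ : tsupport (φ ∘ Prod.fst : ℝ × ℝ → ℝ) ⊆ O := fun p hp =>
    hUO ⟨hφU (tsupport_comp_subset_preimage φ continuous_fst hp), trivial⟩
  refine ⟨dustTensor (φ ∘ Prod.fst) ![0, 1], contDiff_dustTensor (hφ.comp contDiff_fst) _,
    fun _ => rfl, isSymm_dustTensor _ _, fun p b => ?_,
    (tsupport_dustTensor_subset _ _).trans hρ, ⟨0, fun h => ?_⟩, fun p => ?_⟩
  · have hflow : fderiv ℝ (φ ∘ Prod.fst) p (0, 1) = 0 :=
      fderiv_apply_eq_zero_of_forall_add_smul_eq fun s => by simp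
    exact (divergence_dustTensor _ _ p b).trans (mul_eq_zero_of_left hflow _)
  · simpa [dustTensor_apply, hφ0] using congr_fun₂ h 1 1
  · exact strictDominantEnergyCondition_dustTensor (hφrange (mem_range_self p.1)).1
      (by simp) (by simp)
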